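/- Let p be a real polynomial in n variables, homogeneous of degree d, hyperbolic in direction e ∈ ℝⁿ with p(e) > 0. Then for every e' ∈ Λ₊₊: (i) e'ᵀH(e')e' = d, i.e. ‖e'‖_{e'} = √d; and (ii) the open local unit ball {x ∈ ℝⁿ : (x − e')ᵀH(e')(x − e') < 1} is contained in Λ₊₊. -/

import Mathlib

open scoped BigOperators

/-- The univariate polynomial `t ↦ p(t • e - x)` associated to a multivariate polynomial `p`,
a direction `e` and a point `x`. -/
noncomputable def hypCharPoly {n : ℕ} (p : MvPolynomial (Fin n) ℝ) (e x : Fin n → ℝ) :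
    Polynomial ℝ :=
  MvPolynomial.aeval (fun i => Polynomial.C (e i) * Polynomial.X - Polynomial.C (x i)) p

/-- `p` is a homogeneous polynomial of degree `d`, hyperbolic in direction `e`:
`p(e) ≠ 0` and for every `x` the polynomial `t ↦ p(t • e - x)` has `d` real roots
counted with multiplicity. -/
def IsHyperbolicPoly {n : ℕ} (p : MvPolynomial (Fin n) ℝ) (e : Fin n → ℝ) (d : ℕ) : Prop :=
  p.IsHomogeneous d ∧ MvPolynomial.eval e p ≠ 0 ∧
    ∀ x : Fin n → ℝ, Multiset.card (hypCharPoly p e x).roots = d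

/-- The (closed) hyperbolicity cone `Λ₊`: all hyperbolic eigenvalues are nonnegative. -/
def hypConeClosed {n : ℕ} (p : MvPolynomial (Fin n) ℝ) (e : Fin n → ℝ) : Set (Fin n → ℝ) :=
  {x | ∀ r ∈ (hypCharPoly p e x).roots, (0:ℝ) ≤ r}

/-- The open hyperbolicity cone `Λ₊₊`: all hyperbolic eigenvalues are positive. -/
def hypConeOpen {n : ℕ} (p : MvPolynomial (Fin n) ℝ) (e : Fin n → ℝ) : Set (Fin n → ℝ) :=
  {x | ∀ r ∈ (hypCharPoly p e x).roots, (0:ℝ) < r}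

/-- The gradient of `f(x) = -ln p(x)`, namely `g(x)ᵢ = -(∂ᵢ p)(x) / p(x)`. -/
noncomputable def gradNegLog {n : ℕ} (p : MvPolynomial (Fin n) ℝ) (x : Fin n → ℝ) :
    Fin n → ℝ :=
  fun i => -(MvPolynomial.eval x (MvPolynomial.pderiv i p)) / MvPolynomial.eval x p

/-- The Hessian of `f(x) = -ln p(x)`, namely
`H(x)ᵢⱼ = (∂ᵢp)(x)(∂ⱼp)(x)/p(x)² - (∂ᵢ∂ⱼp)(x)/p(x)`. -/
noncomputable def hessNegLog {n : ℕ} (p : MvPolynomial (Fin n) ℝ) (x : Fin n → ℝ) :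
    Matrix (Fin n) (Fin n) ℝ :=
  Matrix.of fun i j =>
    MvPolynomial.eval x (MvPolynomial.pderiv i p) * MvPolynomial.eval x (MvPolynomial.pderiv j p)
        / (MvPolynomial.eval x p) ^ 2
      - MvPolynomial.eval x (MvPolynomial.pderiv i (MvPolynomial.pderiv j p))
        / MvPolynomial.eval x p

/-- The local inner product `⟨u, v⟩_{e'} = uᵀ H(e') v`. -/
noncomputable def localIP {n : ℕ} (p : MvPolynomial (Fin n) ℝ) (e' u v : Fin n → ℝ) : ℝ :=
  ∑ i, ∑ j, u i * hessNegLog p e' i j * v j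

/-- The local norm `‖v‖_{e'} = ⟨v, v⟩_{e'}^{1/2}`. -/
noncomputable def localNorm {n : ℕ} (p : MvPolynomial (Fin n) ℝ) (e' v : Fin n → ℝ) : ℝ :=
  Real.sqrt (localIP p e' v v)

/-- The closed quadratic cone `K_{e'}(α) = {x : ⟨e', x⟩_{e'} ≥ α ‖x‖_{e'}}`. -/
noncomputable def quadCone {n : ℕ} (p : MvPolynomial (Fin n) ℝ) (e' : Fin n → ℝ) (α : ℝ) :
    Set (Fin n → ℝ) :=
  {x | α * localNorm p e' x ≤ localIP p e' e' x}

/-- The hyperbolicity cone is regular: it contains no nonzero linear subspace. -/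
def IsRegularCone {n : ℕ} (p : MvPolynomial (Fin n) ℝ) (e : Fin n → ℝ) : Prop :=
  ∀ W : Submodule ℝ (Fin n → ℝ), (W : Set (Fin n → ℝ)) ⊆ hypConeClosed p e → W = ⊥

/-!
A hyperbolic polynomial is hyperbolic in every direction `e'` of its open cone (Gårding). Indeed
`p(x + w e + t e') ≠ 0` when `Im w > 0` and `Im t ≥ 0`: as `(w, x)` varies over a connected set, no
root `t` crosses the real axis, where hyperbolicity in direction `e` forbids it, and at
`(w, x) = (i, 0)` the roots are `t = -i / r` with `r > 0` an eigenvalue of `e'`. Letting `w` tend to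
`0` shows that `t ↦ p(x + t e')` has no root with `Im t > 0`, and by symmetry only real ones.

One may thus measure eigenvalues in direction `e'` itself. There
`p(e' + t v) = p(e') ∏ (1 + t λᵢ)`, where `λᵢ` are the eigenvalues of `v`, so `vᵀ H(e') v = ∑ λᵢ²`.
All eigenvalues of `e'` equal `1`, which gives `e'ᵀ H(e') e' = d`. If `∑ λᵢ² < 1`, then `e' + v` has
eigenvalues `1 + λᵢ > 0`, so it lies in the open cone of direction `e'`. That cone is star-shaped
about `e'` and avoids the zeros of `p`, so by continuity of the roots no eigenvalue in direction `e`
changes sign on it.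
-/

open Polynomial Topology

section Aeval

variable {σ R A : Type*} [CommSemiring R] [CommSemiring A] [Algebra R A] {p : MvPolynomial σ R}
  {d : ℕ}

lemma degree_eq_of_mem_support_of_isHomogeneous (hp : p.IsHomogeneous d) {m : σ →₀ ℕ}
    (hm : m ∈ p.support) : m.degree = d := by
  rw [Finsupp.degree_eq_weight_one]
  exact hp (MvPolynomial.mem_support_iff.mp hm)

lemma aeval_smul_of_isHomogeneous (hp : p.IsHomogeneous d) (c : A) (x : σ → A) :
    MvPolynomial.aeval (c • x) p = c ^ d * MvPolynomial.aeval x p := by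
  simp only [MvPolynomial.aeval_def, MvPolynomial.eval₂_eq, Finset.mul_sum]
  refine Finset.sum_congr rfl fun m hm => ?_
  rw [← degree_eq_of_mem_support_of_isHomogeneous hp hm, Finsupp.degree_apply]
  simp only [Pi.smul_apply, smul_eq_mul, mul_pow, Finset.prod_mul_distrib,
    Finset.prod_pow_eq_pow_sum]
  ring

lemma aeval_smul_eq_zero_iff [NoZeroDivisors A] (hp : p.IsHomogeneous d) {c : A} (hc : c ≠ 0)
    (x : σ → A) : MvPolynomial.aeval (c • x) p = 0 ↔ MvPolynomial.aeval x p = 0 := by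
  have : Nontrivial A := ⟨c, 0, hc⟩
  rw [aeval_smul_of_isHomogeneous hp, mul_eq_zero_iff_left (pow_ne_zero d hc)]

lemma eval_smul_eq_zero_iff [NoZeroDivisors R] (hp : p.IsHomogeneous d) {c : R} (hc : c ≠ 0)
    (x : σ → R) : MvPolynomial.eval (c • x) p = 0 ↔ MvPolynomial.eval x p = 0 :=
  aeval_smul_eq_zero_iff hp hc x

lemma natDegree_aeval_le_of_isHomogeneous (hp : p.IsHomogeneous d) {f : σ → A[X]} {k : ℕ}
    (hf : ∀ i, (f i).natDegree ≤ k) : (MvPolynomial.aeval f p).natDegree ≤ d * k := by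
  rw [← MvPolynomial.aeval_map_algebraMap A]
  exact MvPolynomial.aeval_natDegree_le _ (hp.map _).totalDegree_le f hf

lemma coeff_aeval_of_isHomogeneous (hp : p.IsHomogeneous d) {f : σ → A[X]} {k : ℕ}
    (hf : ∀ i, (f i).natDegree ≤ k) :
    (MvPolynomial.aeval f p).coeff (d * k) = MvPolynomial.aeval (fun i => (f i).coeff k) p := by
  classical
  have hprod {B : Type _} [CommSemiring B] (m : σ →₀ ℕ) (g : σ → B) :
      ∏ i ∈ m.support, g i ^ m i = (m.toMultiset.map g).prod := by
    simp [Finset.prod_multiset_map_count]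
  simp only [MvPolynomial.aeval_def, MvPolynomial.eval₂_eq, finsetSum_coeff]
  refine Finset.sum_congr rfl fun m hm => ?_
  have hcard : Multiset.card (m.toMultiset.map f) = d := by
    rw [Multiset.card_map, Finsupp.card_toMultiset,
      ← degree_eq_of_mem_support_of_isHomogeneous hp hm, Finsupp.degree_apply]
    rfl
  have hcoeff := coeff_multiset_prod_of_natDegree_le (m.toMultiset.map f) k (by simp [hf])
  rw [Polynomial.algebraMap_apply, coeff_C_mul, hprod, ← hcard, hcoeff, hprod, Multiset.map_map]
  rfl

lemma derivative_aeval [Fintype σ] (p : MvPolynomial σ R) (f : σ → A[X]) :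
    derivative (MvPolynomial.aeval f p) =
      ∑ i, MvPolynomial.aeval f (MvPolynomial.pderiv i p) * derivative (f i) := by
  classical
  induction p using MvPolynomial.induction_on with
  | C a => simp [Polynomial.algebraMap_apply]
  | add p q hp hq => simp only [map_add, hp, hq, add_mul, Finset.sum_add_distrib]
  | mul_X p j hp =>
    simp [hp, Derivation.leibniz, MvPolynomial.pderiv_X, Pi.single_apply, add_mul,
      Finset.sum_add_distrib, Finset.sum_mul, add_comm, mul_right_comm, mul_comm (f j), apply_ite]

lemma continuous_coeff_aeval [TopologicalSpace A] [IsTopologicalSemiring A] {α : Type*}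
    [TopologicalSpace α] (p : MvPolynomial σ R) {f : α → σ → A[X]}
    (hf : ∀ i k, Continuous fun a => (f a i).coeff k) (k : ℕ) :
    Continuous fun a => (MvPolynomial.aeval (f a) p).coeff k := by
  induction p using MvPolynomial.induction_on generalizing k with
  | C r => simpa using continuous_const
  | add p q hp hq => simpa using (hp k).fun_add (hq k)
  | mul_X p i hp =>
    simp only [map_mul, MvPolynomial.aeval_X, coeff_mul]
    exact continuous_finsetSum _ fun z _ => (hp z.1).mul (hf i z.2)

end Aeval

section LineRestrict

variable {σ R A : Type*} [CommSemiring R] [CommSemiring A] [Algebra R A] {d : ℕ}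

/-- The univariate polynomial `t ↦ p(y + t • v)`, the restriction of `p` to the line through `y`
with direction `v`. The point and the direction may have entries in any algebra over the
coefficient ring, so that real polynomials can be restricted to complex lines. -/
noncomputable def lineRestrict (p : MvPolynomial σ R) (y v : σ → A) : A[X] :=
  MvPolynomial.aeval (fun i => C (v i) * X + C (y i)) p

lemma aeval_lineRestrict {B : Type*} [CommSemiring B] [Algebra R B] [Algebra A B]
    [IsScalarTower R A B] (p : MvPolynomial σ R) (y v : σ → A) (t : B) :
    aeval t (lineRestrict p y v) =
      MvPolynomial.aeval (fun i => algebraMap A B (y i) + t * algebraMap A B (v i)) p := by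
  have h := MvPolynomial.comp_aeval_apply (fun i => C (v i) * X + C (y i))
    ((aeval t : A[X] →ₐ[A] B).restrictScalars R) p
  simpa [lineRestrict, add_comm, mul_comm t] using h

lemma eval_lineRestrict (p : MvPolynomial σ R) (y v : σ → A) (t : A) :
    (lineRestrict p y v).eval t = MvPolynomial.aeval (y + t • v) p :=
  aeval_lineRestrict p y v t

lemma natDegree_lineRestrict_le {p : MvPolynomial σ R} (hp : p.IsHomogeneous d) (y v : σ → A) :
    (lineRestrict p y v).natDegree ≤ d := by
  simpa [lineRestrict] using natDegree_aeval_le_of_isHomogeneous hp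
    (f := fun i => C (v i) * X + C (y i)) fun _ => natDegree_linear_le

lemma coeff_lineRestrict {p : MvPolynomial σ R} (hp : p.IsHomogeneous d) (y v : σ → A) :
    (lineRestrict p y v).coeff d = MvPolynomial.aeval v p := by
  simpa [lineRestrict] using coeff_aeval_of_isHomogeneous hp
    (f := fun i => C (v i) * X + C (y i)) fun _ => natDegree_linear_le

lemma degree_lineRestrict {p : MvPolynomial σ R} (hp : p.IsHomogeneous d) (y : σ → A)
    {v : σ → A} (hv : MvPolynomial.aeval v p ≠ 0) : (lineRestrict p y v).degree = d :=
  degree_eq_of_le_of_coeff_ne_zero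
    (natDegree_le_iff_degree_le.mp (natDegree_lineRestrict_le hp y v))
    (by rwa [coeff_lineRestrict hp])

lemma derivative_lineRestrict [Fintype σ] (p : MvPolynomial σ R) (y v : σ → A) :
    derivative (lineRestrict p y v) =
      ∑ i, lineRestrict (MvPolynomial.pderiv i p) y v * C (v i) := by
  simp [lineRestrict, derivative_aeval]

lemma continuous_coeff_lineRestrict [TopologicalSpace A] [IsTopologicalSemiring A] {α : Type*}
    [TopologicalSpace α] (p : MvPolynomial σ R) {y v : α → σ → A} (hy : Continuous y)
    (hv : Continuous v) (k : ℕ) : Continuous fun a => (lineRestrict p (y a) (v a)).coeff k := by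
  refine continuous_coeff_aeval p (fun i k => ?_) k
  simp only [coeff_add, coeff_C_mul, coeff_C, coeff_X]
  split_ifs <;> fun_prop

end LineRestrict

section Roots

variable {𝕜 α : Type*} [NormedField 𝕜] [TopologicalSpace α] {f : α → 𝕜[X]} {d : ℕ}

lemma continuous_eval_of_continuous_coeff (hf : ∀ i, Continuous fun a => (f a).coeff i)
    (hd : ∀ a, (f a).natDegree ≤ d) : Continuous fun z : α × 𝕜 => (f z.1).eval z.2 := by
  simp only [fun z : α × 𝕜 => eval_eq_sum_range' (Nat.lt_succ_of_le (hd z.1)) z.2]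
  exact continuous_finsetSum _ fun i _ =>
    ((hf i).comp continuous_fst).mul (continuous_snd.pow i)

lemma norm_leadingCoeff_mul_pow_le_norm_eval {q : 𝕜[X]} (hq : q.Splits) {x : 𝕜} {ε : ℝ}
    (hε : 0 ≤ ε) (h : ∀ r ∈ q.roots, ε ≤ ‖x - r‖) :
    ‖q.leadingCoeff‖ * ε ^ q.natDegree ≤ ‖q.eval x‖ := by
  have hprod : ε ^ q.natDegree ≤ (q.roots.map fun r => ‖x - r‖).prod := by
    simpa [hq.natDegree_eq_card_roots] using
      Multiset.prod_map_le_prod_map₀ (fun _ => ε) (fun r => ‖x - r‖) (fun _ _ => hε) h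
  have hnorm : ‖(q.roots.map (x - ·)).prod‖ = (q.roots.map fun r => ‖x - r‖).prod := by
    simpa using (q.roots.prod_hom' (normHom : 𝕜 →*₀ ℝ) (x - ·)).symm
  rw [hq.eval_eq_prod_roots, norm_mul, hnorm]
  gcongr

lemma isOpen_setOf_exists_isRoot_mem (hf : ∀ i, Continuous fun a => (f a).coeff i)
    (hd : ∀ a, (f a).degree = d) (hs : ∀ a, (f a).Splits) {U : Set 𝕜} (hU : IsOpen U) :
    IsOpen {a | ∃ t ∈ U, (f a).IsRoot t} := by
  have hnat (a : α) : (f a).natDegree = d := natDegree_eq_of_degree_eq_some (hd a)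
  refine isOpen_iff_mem_nhds.mpr ?_
  rintro a ⟨t, htU, ht⟩
  obtain ⟨ε, hε, hball⟩ := Metric.isOpen_iff.mp hU t htU
  have hlead : 0 < ‖(f a).coeff d‖ :=
    norm_pos_iff.mpr (coeff_ne_zero_of_eq_degree (hd a))
  have heval : Continuous fun b => (f b).eval t :=
    (continuous_eval_of_continuous_coeff hf fun a => (hnat a).le).comp
      (Continuous.prodMk_left t)
  have hlt : ‖(f a).eval t‖ < ‖(f a).coeff d‖ * ε ^ d := by
    rw [ht.eq_zero, norm_zero]
    positivity
  filter_upwards [heval.norm.continuousAt.eventually_lt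
    ((hf d).norm.mul continuous_const).continuousAt hlt] with b hb
  by_contra! hroot
  refine hb.not_ge ?_
  have hfar : ∀ r ∈ (f b).roots, ε ≤ ‖t - r‖ := fun r hr => by
    by_contra! hclose
    exact hroot r (hball (mem_ball_iff_norm'.mpr hclose)) (isRoot_of_mem_roots hr)
  simpa [leadingCoeff, hnat] using norm_leadingCoeff_mul_pow_le_norm_eval (hs b) hε.le hfar

lemma isClosed_setOf_exists_isRoot_mem [ProperSpace 𝕜]
    (hf : ∀ i, Continuous fun a => (f a).coeff i) (hd : ∀ a, (f a).degree = d) {K : Set 𝕜}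
    (hK : IsClosed K) : IsClosed {a | ∃ t ∈ K, (f a).IsRoot t} := by
  have hnat (a : α) : (f a).natDegree = d := natDegree_eq_of_degree_eq_some (hd a)
  have hne (a : α) : f a ≠ 0 := by
    intro h
    simpa [h] using hd a
  have hbound : Continuous fun a => (cauchyBound (f a) : ℝ) := by
    simp only [cauchyBound, leadingCoeff, hnat]
    refine NNReal.continuous_coe.comp (.add (.div₀ ?_ (hf d).nnnorm ?_) continuous_const)
    · exact Continuous.finset_sup_apply fun i _ => (hf i).nnnorm
    · exact fun a => nnnorm_ne_zero_iff.mpr (coeff_ne_zero_of_eq_degree (hd a))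
  refine ⟨isOpen_iff_mem_nhds.mpr fun a ha => ?_⟩
  have ha : ∀ t ∈ K, ¬ (f a).IsRoot t := fun t ht h => ha ⟨t, ht, h⟩
  let R : ℝ := cauchyBound (f a) + 1
  have hcpt : IsCompact (K ∩ Metric.closedBall 0 R) := (isCompact_closedBall 0 R).inter_left hK
  have hnear : ∀ᶠ b in 𝓝 a, ∀ t ∈ K ∩ Metric.closedBall 0 R, ¬ (f b).IsRoot t :=
    hcpt.eventually_forall_of_forall_eventually fun t ht =>
      (continuous_eval_of_continuous_coeff hf fun a => (hnat a).le).continuousAt.eventually_ne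
        (ha t ht.1)
  filter_upwards [hnear, hbound.continuousAt.eventually_lt_const (lt_add_one _)] with b hb hbR
  rintro ⟨t, htK, ht⟩
  have htR : ‖t‖ ≤ R := ((NNReal.coe_lt_coe.mpr (ht.norm_lt_cauchyBound (hne b))).trans hbR).le
  exact hb t ⟨htK, mem_closedBall_zero_iff.mpr htR⟩ ht

lemma forall_not_isRoot_of_isPreconnected [ProperSpace 𝕜]
    (hf : ∀ i, Continuous fun a => (f a).coeff i) (hd : ∀ a, (f a).degree = d)
    (hs : ∀ a, (f a).Splits) {K : Set 𝕜} (hK : IsClosed K) {S : Set α} (hS : IsPreconnected S)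
    (hfr : ∀ a ∈ S, ∀ t ∈ frontier K, ¬ (f a).IsRoot t) {a₀ : α} (ha₀ : a₀ ∈ S)
    (h₀ : ∀ t ∈ K, ¬ (f a₀).IsRoot t) : ∀ a ∈ S, ∀ t ∈ K, ¬ (f a).IsRoot t := by
  let u : Set α := {a | ∃ t ∈ K, (f a).IsRoot t}ᶜ
  have hu : IsOpen u := (isClosed_setOf_exists_isRoot_mem hf hd hK).isOpen_compl
  have hclosure : closure u ∩ S ⊆ u := by
    rintro a ⟨hau, haS⟩ ⟨t, htK, ht⟩
    have htint : t ∈ interior K := by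
      by_contra hint
      exact hfr a haS t ⟨subset_closure htK, hint⟩ ht
    obtain ⟨b, ⟨s, hsK, hsroot⟩, hbu⟩ := mem_closure_iff.mp hau _
      (isOpen_setOf_exists_isRoot_mem hf hd hs isOpen_interior) ⟨t, htint, ht⟩
    exact hbu ⟨s, interior_subset hsK, hsroot⟩
  have hsub : S ⊆ u := hS.subset_of_closure_inter_subset hu
    ⟨a₀, ha₀, fun ⟨t, htK, ht⟩ => h₀ t htK ht⟩ hclosure
  exact fun a ha t htK ht => hsub ha ⟨t, htK, ht⟩

end Roots

section Laguerre

/-- The Laguerre expression `q'(x)² - q(x) q''(x)`, that is, `-q² (ln q)''` at `x` without its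
denominators. -/
noncomputable def laguerre {R : Type*} [CommRing R] (q : R[X]) (x : R) : R :=
  (derivative q).eval x ^ 2 - q.eval x * (derivative (derivative q)).eval x

lemma laguerre_mul {R : Type*} [CommRing R] (f g : R[X]) (x : R) :
    laguerre (f * g) x = f.eval x ^ 2 * laguerre g x + g.eval x ^ 2 * laguerre f x := by
  simp only [laguerre, derivative_mul, derivative_add, eval_add, eval_mul]
  ring

lemma laguerre_prod_one_add_C_mul_X_zero {R : Type*} [CommRing R] (s : Multiset R) :
    laguerre (s.map fun r => 1 + C r * X).prod 0 = (s.map (· ^ 2)).sum := by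
  induction s using Multiset.induction_on with
  | empty => simp [laguerre]
  | cons r s ih =>
    have heval : ((s.map fun r => 1 + C r * X).prod).eval 0 = 1 := by
      simp [eval_multiset_prod]
    have hlin : laguerre (1 + C r * X) 0 = r ^ 2 := by simp [laguerre]
    simp [laguerre_mul, heval, hlin, ih, add_comm]

lemma localIP_eq_laguerre_div {n : ℕ} (p : MvPolynomial (Fin n) ℝ) (y v : Fin n → ℝ) :
    localIP p y v v = laguerre (lineRestrict p y v) 0 / MvPolynomial.eval y p ^ 2 := by
  have heval (q : MvPolynomial (Fin n) ℝ) :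
      (lineRestrict q y v).eval 0 = MvPolynomial.eval y q := by
    simp [eval_lineRestrict, MvPolynomial.aeval_eq_eval]
  simp only [laguerre, derivative_lineRestrict, derivative_sum, derivative_mul, derivative_C,
    mul_zero, add_zero, eval_finsetSum, eval_mul, eval_C, heval, localIP, hessNegLog,
    Matrix.of_apply]
  rw [sub_div, sq (Finset.sum _ _), Finset.sum_mul_sum, Finset.sum_div, Finset.mul_sum,
    Finset.sum_div, Finset.sum_comm, ← Finset.sum_sub_distrib]
  refine Finset.sum_congr rfl fun i _ => ?_
  rw [Finset.sum_mul, Finset.mul_sum, Finset.sum_div, Finset.sum_div, ← Finset.sum_sub_distrib]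
  refine Finset.sum_congr rfl fun j _ => ?_
  rcases eq_or_ne (MvPolynomial.eval y p) 0 with h | h
  · simp [h]
  · field_simp

end Laguerre

section RealRooted

lemma splits_iff_forall_im_eq_zero {q : ℝ[X]} (hq : q ≠ 0) :
    q.Splits ↔ ∀ z : ℂ, aeval z q = 0 → z.im = 0 := by
  have hroot {z : ℂ} : z ∈ (q.map (algebraMap ℝ ℂ)).roots ↔ aeval z q = 0 := by
    rw [mem_roots_map_of_injective (algebraMap ℝ ℂ).injective hq, aeval_def]
  constructor
  · intro hsplit z hz
    have hz' : z ∈ (q.map (algebraMap ℝ ℂ)).roots := hroot.mpr hz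
    rw [hsplit.roots_map, Multiset.mem_map] at hz'
    obtain ⟨r, -, rfl⟩ := hz'
    exact Complex.ofReal_im r
  · intro hreal
    refine Splits.of_splits_map (algebraMap ℝ ℂ) (IsAlgClosed.splits _) fun z hz => ?_
    exact ⟨z.re, Complex.ext rfl (hreal z (hroot.mp hz)).symm⟩

end RealRooted

section Complexify

variable {σ : Type*}

/-- The inclusion of `ℝ^σ` into its complexification `ℂ^σ`. -/
noncomputable def complexify : (σ → ℝ) →ₗ[ℝ] (σ → ℂ) :=
  Complex.ofRealCLM.toLinearMap.compLeft σ

lemma continuous_complexify : Continuous (complexify : (σ → ℝ) → σ → ℂ) :=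
  continuous_pi fun i => Complex.continuous_ofReal.comp (continuous_apply i)

lemma aeval_complexify (p : MvPolynomial σ ℝ) (x : σ → ℝ) :
    MvPolynomial.aeval (complexify x) p = (MvPolynomial.eval x p : ℂ) :=
  MvPolynomial.aeval_algebraMap_apply ℂ x p

lemma complexify_add_smul_of_im_eq_zero (x v : σ → ℝ) {z : ℂ} (hz : z.im = 0) :
    complexify x + z • complexify v = complexify (x + z.re • v) := by
  obtain ⟨r, rfl⟩ : ∃ r : ℝ, (r : ℂ) = z := ⟨z.re, Complex.ext rfl hz.symm⟩
  rw [Complex.ofReal_re, Complex.coe_smul, map_add, map_smul]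

lemma continuous_coeff_lineRestrict_complexify (p : MvPolynomial σ ℝ) (u v : σ → ℝ) (k : ℕ) :
    Continuous fun z : ℂ × (σ → ℝ) =>
      (lineRestrict p (complexify z.2 + z.1 • complexify u) (complexify v)).coeff k :=
  continuous_coeff_lineRestrict p
    ((continuous_complexify.comp continuous_snd).add (continuous_fst.smul continuous_const))
    continuous_const k

lemma degree_lineRestrict_complexify {p : MvPolynomial σ ℝ} {d : ℕ} (hp : p.IsHomogeneous d)
    {v : σ → ℝ} (hv : MvPolynomial.eval v p ≠ 0) (y : σ → ℂ) :
    (lineRestrict p y (complexify v)).degree = d := by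
  refine degree_lineRestrict hp y ?_
  rwa [aeval_complexify, Complex.ofReal_ne_zero]

end Complexify

section Hyperbolic

variable {n d : ℕ} {p : MvPolynomial (Fin n) ℝ} {e e' : Fin n → ℝ}

lemma hypCharPoly_eq_lineRestrict (p : MvPolynomial (Fin n) ℝ) (e x : Fin n → ℝ) :
    hypCharPoly p e x = lineRestrict p (-x) e := by
  simp [hypCharPoly, lineRestrict, sub_eq_add_neg]

lemma eval_hypCharPoly (p : MvPolynomial (Fin n) ℝ) (e x : Fin n → ℝ) (t : ℝ) :
    (hypCharPoly p e x).eval t = MvPolynomial.eval (t • e - x) p := by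
  rw [hypCharPoly_eq_lineRestrict, eval_lineRestrict, MvPolynomial.aeval_eq_eval, neg_add_eq_sub]

lemma degree_hypCharPoly (hp : p.IsHomogeneous d) (he : MvPolynomial.eval e p ≠ 0)
    (x : Fin n → ℝ) : (hypCharPoly p e x).degree = d := by
  rw [hypCharPoly_eq_lineRestrict]
  exact degree_lineRestrict hp _ (by rwa [MvPolynomial.aeval_eq_eval])

lemma hypCharPoly_ne_zero (hp : p.IsHomogeneous d) (he : MvPolynomial.eval e p ≠ 0)
    (x : Fin n → ℝ) : hypCharPoly p e x ≠ 0 :=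
  ne_zero_of_degree_gt (n := ⊥) (by simp [degree_hypCharPoly hp he])

lemma splits_hypCharPoly_iff (hp : p.IsHomogeneous d) (he : MvPolynomial.eval e p ≠ 0)
    (x : Fin n → ℝ) :
    (hypCharPoly p e x).Splits ↔ Multiset.card (hypCharPoly p e x).roots = d := by
  rw [splits_iff_card_roots, natDegree_eq_of_degree_eq_some (degree_hypCharPoly hp he x)]

lemma isHyperbolicPoly_iff_forall_im_eq_zero (hp : p.IsHomogeneous d)
    (he : MvPolynomial.eval e p ≠ 0) :
    IsHyperbolicPoly p e d ↔ ∀ (x : Fin n → ℝ) (w : ℂ),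
      MvPolynomial.aeval (complexify x + w • complexify e) p = 0 → w.im = 0 := by
  have hline (x : Fin n → ℝ) (w : ℂ) : aeval w (hypCharPoly p e x) =
      MvPolynomial.aeval (complexify (-x) + w • complexify e) p := by
    rw [hypCharPoly_eq_lineRestrict]
    exact aeval_lineRestrict p (-x) e w
  have hsplits (x : Fin n → ℝ) : Multiset.card (hypCharPoly p e x).roots = d ↔
      ∀ w : ℂ, MvPolynomial.aeval (complexify (-x) + w • complexify e) p = 0 → w.im = 0 := by
    simp only [← splits_hypCharPoly_iff hp he,
      splits_iff_forall_im_eq_zero (hypCharPoly_ne_zero hp he x), hline]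
  calc IsHyperbolicPoly p e d
      ↔ ∀ x, Multiset.card (hypCharPoly p e x).roots = d := by simp [IsHyperbolicPoly, hp, he]
    _ ↔ _ := forall_congr' hsplits
    _ ↔ _ := (Equiv.neg (Fin n → ℝ)).forall_congr_right (q := fun y => ∀ w : ℂ,
      MvPolynomial.aeval (complexify y + w • complexify e) p = 0 → w.im = 0)

namespace IsHyperbolicPoly

lemma isHomogeneous (hp : IsHyperbolicPoly p e d) : p.IsHomogeneous d := hp.1

lemma eval_ne_zero (hp : IsHyperbolicPoly p e d) : MvPolynomial.eval e p ≠ 0 := hp.2.1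

lemma card_roots_hypCharPoly (hp : IsHyperbolicPoly p e d) (x : Fin n → ℝ) :
    Multiset.card (hypCharPoly p e x).roots = d := hp.2.2 x

lemma splits_hypCharPoly (hp : IsHyperbolicPoly p e d) (x : Fin n → ℝ) :
    (hypCharPoly p e x).Splits :=
  (splits_hypCharPoly_iff hp.isHomogeneous hp.eval_ne_zero x).mpr (hp.card_roots_hypCharPoly x)

lemma leadingCoeff_hypCharPoly (hp : IsHyperbolicPoly p e d) (x : Fin n → ℝ) :
    (hypCharPoly p e x).leadingCoeff = MvPolynomial.eval e p := by
  rw [leadingCoeff, natDegree_eq_of_degree_eq_some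
    (degree_hypCharPoly hp.isHomogeneous hp.eval_ne_zero x), hypCharPoly_eq_lineRestrict,
    coeff_lineRestrict hp.isHomogeneous, MvPolynomial.aeval_eq_eval]

lemma mem_roots_hypCharPoly_iff (hp : IsHyperbolicPoly p e d) {x : Fin n → ℝ} {r : ℝ} :
    r ∈ (hypCharPoly p e x).roots ↔ MvPolynomial.eval (r • e - x) p = 0 := by
  rw [mem_roots (hypCharPoly_ne_zero hp.isHomogeneous hp.eval_ne_zero x), IsRoot,
    eval_hypCharPoly]

lemma mem_hypConeOpen_iff (hp : IsHyperbolicPoly p e d) {x : Fin n → ℝ} :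
    x ∈ hypConeOpen p e ↔ ∀ r : ℝ, 0 ≤ r → MvPolynomial.eval (x + r • e) p ≠ 0 := by
  have hroot (r : ℝ) :
      -r ∈ (hypCharPoly p e x).roots ↔ MvPolynomial.eval (x + r • e) p = 0 := by
    have hneg : -r • e - x = (-1 : ℝ) • (x + r • e) := by module
    rw [hp.mem_roots_hypCharPoly_iff, hneg,
      eval_smul_eq_zero_iff hp.isHomogeneous (neg_ne_zero.mpr one_ne_zero)]
  constructor
  · intro hx r hr hzero
    exact (hx _ ((hroot r).mpr hzero)).not_ge (neg_nonpos.mpr hr)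
  · intro hx r hr
    by_contra! hr0
    exact hx (-r) (neg_nonneg.mpr hr0) ((hroot (-r)).mp (by rwa [neg_neg]))

lemma eval_ne_zero_of_mem_hypConeOpen (hp : IsHyperbolicPoly p e d) {x : Fin n → ℝ}
    (hx : x ∈ hypConeOpen p e) : MvPolynomial.eval x p ≠ 0 := by
  simpa using hp.mem_hypConeOpen_iff.mp hx 0 le_rfl

lemma eq_one_of_mem_roots_hypCharPoly_self (hp : IsHyperbolicPoly p e d) {r : ℝ}
    (hr : r ∈ (hypCharPoly p e e).roots) : r = 1 := by
  by_contra hr1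
  have hzero : MvPolynomial.eval ((r - 1) • e) p = 0 := by
    rw [sub_smul, one_smul]
    exact hp.mem_roots_hypCharPoly_iff.mp hr
  exact hp.eval_ne_zero
    ((eval_smul_eq_zero_iff hp.isHomogeneous (sub_ne_zero.mpr hr1) e).mp hzero)

lemma self_mem_hypConeOpen (hp : IsHyperbolicPoly p e d) : e ∈ hypConeOpen p e := fun r hr => by
  rw [hp.eq_one_of_mem_roots_hypCharPoly_self hr]
  exact one_pos

lemma im_eq_zero_of_aeval_eq_zero (hp : IsHyperbolicPoly p e d) (x : Fin n → ℝ) {w : ℂ}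
    (h : MvPolynomial.aeval (complexify x + w • complexify e) p = 0) : w.im = 0 :=
  (isHyperbolicPoly_iff_forall_im_eq_zero hp.isHomogeneous hp.eval_ne_zero).mp hp x w h

lemma aeval_I_smul_add_smul_ne_zero (hp : IsHyperbolicPoly p e d) (he' : e' ∈ hypConeOpen p e)
    {t : ℂ} (ht : 0 ≤ t.im) :
    MvPolynomial.aeval (Complex.I • complexify e + t • complexify e') p ≠ 0 := by
  intro hzero
  rcases eq_or_ne t 0 with rfl | ht0
  · simpa using hp.im_eq_zero_of_aeval_eq_zero 0 (w := Complex.I) (by simpa using hzero)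
  have hdiv : MvPolynomial.aeval (complexify e' + (Complex.I / t) • complexify e) p = 0 := by
    rw [← aeval_smul_eq_zero_iff hp.isHomogeneous ht0, smul_add, smul_smul, mul_div_cancel₀ _ ht0,
      add_comm]
    exact hzero
  have hre : 0 ≤ (Complex.I / t).re := by
    rw [Complex.div_re, Complex.I_re, Complex.I_im, zero_mul, zero_div, zero_add, one_mul]
    exact div_nonneg ht (Complex.normSq_nonneg t)
  refine hp.mem_hypConeOpen_iff.mp he' _ hre (Complex.ofReal_eq_zero.mp ?_)
  rw [← aeval_complexify, ← hdiv,
    complexify_add_smul_of_im_eq_zero _ _ (hp.im_eq_zero_of_aeval_eq_zero e' hdiv)]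

lemma aeval_add_smul_add_smul_ne_zero (hp : IsHyperbolicPoly p e d)
    (he' : e' ∈ hypConeOpen p e) (x : Fin n → ℝ) {w t : ℂ} (hw : 0 < w.im) (ht : 0 ≤ t.im) :
    MvPolynomial.aeval (complexify x + w • complexify e + t • complexify e') p ≠ 0 := by
  let S : Set (ℂ × (Fin n → ℝ)) := {w | 0 < w.im} ×ˢ Set.univ
  have hS : IsPreconnected S := (convex_halfSpace_im_gt 0).isPreconnected.prod isPreconnected_univ
  have hK : IsClosed {s : ℂ | 0 ≤ s.im} := isClosed_le continuous_const Complex.continuous_im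
  have hfrontier : ∀ z ∈ S, ∀ s ∈ frontier {s : ℂ | 0 ≤ s.im},
      ¬ (lineRestrict p (complexify z.2 + z.1 • complexify e) (complexify e')).IsRoot s := by
    rintro ⟨w, x⟩ ⟨hw, -⟩ s hs hroot
    rw [Complex.frontier_setOfPred_le_im] at hs
    rw [IsRoot, eval_lineRestrict, add_right_comm,
      complexify_add_smul_of_im_eq_zero _ _ hs] at hroot
    exact hw.ne' (hp.im_eq_zero_of_aeval_eq_zero _ hroot)
  have hbase : ∀ s ∈ {s : ℂ | 0 ≤ s.im},
      ¬ (lineRestrict p (complexify 0 + Complex.I • complexify e) (complexify e')).IsRoot s := by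
    intro s hs
    rw [IsRoot, eval_lineRestrict, map_zero, zero_add]
    exact hp.aeval_I_smul_add_smul_ne_zero he' hs
  rw [← eval_lineRestrict]
  exact forall_not_isRoot_of_isPreconnected
    (continuous_coeff_lineRestrict_complexify p e e')
    (fun _ => degree_lineRestrict_complexify hp.isHomogeneous
      (hp.eval_ne_zero_of_mem_hypConeOpen he') _)
    (fun _ => IsAlgClosed.splits _) hK hS hfrontier (a₀ := (Complex.I, 0)) (by simp [S]) hbase
    (w, x) ⟨hw, trivial⟩ t ht

lemma aeval_add_smul_ne_zero_of_im_pos (hp : IsHyperbolicPoly p e d)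
    (he' : e' ∈ hypConeOpen p e) (x : Fin n → ℝ) {t : ℂ} (ht : 0 < t.im) :
    MvPolynomial.aeval (complexify x + t • complexify e') p ≠ 0 := by
  let U : Set ℂ := {w | ∃ s ∈ {s : ℂ | 0 < s.im},
    (lineRestrict p (complexify x + w • complexify e) (complexify e')).IsRoot s}
  have hU : IsOpen U :=
    isOpen_setOf_exists_isRoot_mem
      (fun k => (continuous_coeff_lineRestrict_complexify p e e' k).comp (Continuous.prodMk_left x))
      (fun _ => degree_lineRestrict_complexify hp.isHomogeneous
        (hp.eval_ne_zero_of_mem_hypConeOpen he') _)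
      (fun _ => IsAlgClosed.splits _) (isOpen_lt continuous_const Complex.continuous_im)
  have hdisjoint : Disjoint U {w : ℂ | 0 < w.im} := by
    rw [Set.disjoint_left]
    rintro w ⟨s, hs, hroot⟩ hw
    rw [IsRoot, eval_lineRestrict] at hroot
    exact hp.aeval_add_smul_add_smul_ne_zero he' x hw (le_of_lt hs) hroot
  have hclosure : (0 : ℂ) ∈ closure {w : ℂ | 0 < w.im} := by
    simp [Complex.closure_setOfPred_lt_im]
  intro hzero
  refine Set.disjoint_right.mp (hdisjoint.closure_right hU) hclosure ⟨t, ht, ?_⟩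
  rwa [IsRoot, eval_lineRestrict, zero_smul, add_zero]

theorem of_mem_hypConeOpen (hp : IsHyperbolicPoly p e d) (he' : e' ∈ hypConeOpen p e) :
    IsHyperbolicPoly p e' d := by
  refine (isHyperbolicPoly_iff_forall_im_eq_zero hp.isHomogeneous
    (hp.eval_ne_zero_of_mem_hypConeOpen he')).mpr fun x w hzero => ?_
  refine le_antisymm (not_lt.mp fun hw => ?_) (not_lt.mp fun hw => ?_)
  · exact hp.aeval_add_smul_ne_zero_of_im_pos he' x hw hzero
  · refine hp.aeval_add_smul_ne_zero_of_im_pos he' (-x) (t := -w) (by simpa using hw) ?_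
    have hneg : complexify (-x) + -w • complexify e' =
        (-1 : ℂ) • (complexify x + w • complexify e') := by
      rw [map_neg]
      module
    rwa [hneg, aeval_smul_eq_zero_iff hp.isHomogeneous (by norm_num)]

lemma isPreconnected_hypConeOpen (hp : IsHyperbolicPoly p e d) :
    IsPreconnected (hypConeOpen p e) := by
  have hstar : StarConvex ℝ e (hypConeOpen p e) := by
    intro x hx a b ha hb hab
    rcases hb.eq_or_lt with rfl | hb
    · obtain rfl : a = 1 := by linarith
      simpa using hp.self_mem_hypConeOpen
    rw [hp.mem_hypConeOpen_iff] at hx ⊢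
    intro r hr
    have hcomb : a • e + b • x + r • e = b • (x + ((a + r) / b) • e) := by
      rw [smul_add, smul_smul, mul_div_cancel₀ _ hb.ne']
      module
    rw [hcomb, ne_eq, eval_smul_eq_zero_iff hp.isHomogeneous hb.ne']
    exact hx _ (by positivity)
  exact (hstar.isPathConnected hp.self_mem_hypConeOpen).isConnected.isPreconnected

theorem hypConeOpen_subset (hp : IsHyperbolicPoly p e d) (he' : e' ∈ hypConeOpen p e) :
    hypConeOpen p e' ⊆ hypConeOpen p e := by
  have h' : IsHyperbolicPoly p e' d := hp.of_mem_hypConeOpen he'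
  have hcont (k : ℕ) : Continuous fun x => (hypCharPoly p e x).coeff k := by
    simp only [hypCharPoly_eq_lineRestrict]
    exact continuous_coeff_lineRestrict p continuous_neg continuous_const k
  have hmem {x : Fin n → ℝ} {r : ℝ} :
      (hypCharPoly p e x).IsRoot r ↔ r ∈ (hypCharPoly p e x).roots :=
    (mem_roots (hypCharPoly_ne_zero hp.isHomogeneous hp.eval_ne_zero x)).symm
  have hfrontier : ∀ x ∈ hypConeOpen p e', ∀ r ∈ frontier (Set.Iic (0 : ℝ)),
      ¬ (hypCharPoly p e x).IsRoot r := by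
    intro x hx r hr hroot
    obtain rfl : r = 0 := by simpa using hr
    refine h'.eval_ne_zero_of_mem_hypConeOpen hx ?_
    rwa [IsRoot, eval_hypCharPoly, zero_smul, zero_sub, ← neg_one_smul ℝ x,
      eval_smul_eq_zero_iff hp.isHomogeneous (neg_ne_zero.mpr one_ne_zero)] at hroot
  have hbase : ∀ r ∈ Set.Iic (0 : ℝ), ¬ (hypCharPoly p e e').IsRoot r :=
    fun r hr hroot => (he' r (hmem.mp hroot)).not_ge hr
  intro x hx r hr
  by_contra! hr0
  exact forall_not_isRoot_of_isPreconnected hcont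
    (degree_hypCharPoly hp.isHomogeneous hp.eval_ne_zero) hp.splits_hypCharPoly isClosed_Iic
    h'.isPreconnected_hypConeOpen hfrontier (a₀ := e') h'.self_mem_hypConeOpen hbase x hx r hr0
    (hmem.mpr hr)

lemma lineRestrict_eq_C_mul_prod_roots (hp : IsHyperbolicPoly p e d) (v : Fin n → ℝ) :
    lineRestrict p e v = C (MvPolynomial.eval e p) *
      ((hypCharPoly p e v).roots.map fun r => 1 + C r * X).prod := by
  refine Polynomial.funext fun s => ?_
  rw [eval_lineRestrict, MvPolynomial.aeval_eq_eval, eval_mul, eval_C, eval_multiset_prod,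
    Multiset.map_map]
  rcases eq_or_ne s 0 with rfl | hs
  · simp
  have hscale : e + s • v = (-s) • ((-s⁻¹) • e - v) := by
    rw [smul_sub, smul_smul, neg_mul_neg, mul_inv_cancel₀ hs]
    module
  have hfactor : (-s) ^ d * ((hypCharPoly p e v).roots.map fun r => -s⁻¹ - r).prod =
      ((hypCharPoly p e v).roots.map fun r => 1 + r * s).prod := by
    rw [← hp.card_roots_hypCharPoly v, ← Multiset.prod_replicate, ← Multiset.map_const',
      ← Multiset.prod_map_mul]
    refine congrArg _ (Multiset.map_congr rfl fun r _ => ?_)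
    field_simp
    ring
  have heval : MvPolynomial.eval ((-s⁻¹) • e - v) p =
      MvPolynomial.eval e p * ((hypCharPoly p e v).roots.map fun r => -s⁻¹ - r).prod := by
    rw [← eval_hypCharPoly, (hp.splits_hypCharPoly v).eval_eq_prod_roots,
      hp.leadingCoeff_hypCharPoly]
  rw [hscale, ← MvPolynomial.aeval_eq_eval, aeval_smul_of_isHomogeneous hp.isHomogeneous,
    MvPolynomial.aeval_eq_eval, heval, mul_left_comm, hfactor]
  simp

theorem localIP_self_eq_sum_sq_roots (hp : IsHyperbolicPoly p e d) (v : Fin n → ℝ) :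
    localIP p e v v = ((hypCharPoly p e v).roots.map (· ^ 2)).sum := by
  have he : MvPolynomial.eval e p ≠ 0 := hp.eval_ne_zero
  have hC : laguerre (C (MvPolynomial.eval e p)) 0 = 0 := by simp [laguerre]
  rw [localIP_eq_laguerre_div, hp.lineRestrict_eq_C_mul_prod_roots, laguerre_mul, hC, mul_zero,
    add_zero, laguerre_prod_one_add_C_mul_X_zero, eval_C, mul_div_cancel_left₀ _ (pow_ne_zero 2 he)]

theorem localIP_direction (hp : IsHyperbolicPoly p e d) : localIP p e e e = d := by
  have hroots : (hypCharPoly p e e).roots = Multiset.replicate d 1 :=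
    Multiset.eq_replicate.mpr
      ⟨hp.card_roots_hypCharPoly e, fun _ => hp.eq_one_of_mem_roots_hypCharPoly_self⟩
  simp [hp.localIP_self_eq_sum_sq_roots, hroots]

theorem add_mem_hypConeOpen (hp : IsHyperbolicPoly p e d) {v : Fin n → ℝ}
    (hv : localIP p e v v < 1) : e + v ∈ hypConeOpen p e := by
  rw [hp.localIP_self_eq_sum_sq_roots] at hv
  have hroot : ∀ s ∈ (hypCharPoly p e v).roots, -1 < s := fun s hs => by
    have hle : s ^ 2 ≤ ((hypCharPoly p e v).roots.map (· ^ 2)).sum := by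
      refine Multiset.single_le_sum (fun y hy => ?_) _ (Multiset.mem_map_of_mem _ hs)
      obtain ⟨t, -, rfl⟩ := Multiset.mem_map.mp hy
      exact sq_nonneg t
    exact (abs_lt.mp ((sq_lt_one_iff_abs_lt_one s).mp (hle.trans_lt hv))).1
  intro r hr
  have hshift : r - 1 ∈ (hypCharPoly p e v).roots := by
    rw [hp.mem_roots_hypCharPoly_iff] at hr ⊢
    rwa [show (r - 1) • e - v = r • e - (e + v) by module]
  linarith [hroot _ hshift]

end IsHyperbolicPoly

end Hyperbolic

/-- Proposition 8.8 in RS14.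
For every `e' ∈ Λ₊₊`: (i) `e'ᵀ H(e') e' = d`, i.e. `‖e'‖_{e'} = √d`, and
(ii) the open local unit ball around `e'` is contained in `Λ₊₊`. -/
theorem stmt6 {n d : ℕ} (hd : 1 ≤ d) (p : MvPolynomial (Fin n) ℝ) (e : Fin n → ℝ)
    (hp : IsHyperbolicPoly p e d) (hpe : 0 < MvPolynomial.eval e p) :
    ∀ e' ∈ hypConeOpen p e,
      (localIP p e' e' e' = (d : ℝ) ∧ localNorm p e' e' = Real.sqrt d) ∧
      ∀ x : Fin n → ℝ, localIP p e' (x - e') (x - e') < 1 → x ∈ hypConeOpen p e := by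
  intro e' he'
  have h : IsHyperbolicPoly p e' d := hp.of_mem_hypConeOpen he'
  refine ⟨⟨h.localIP_direction, by rw [localNorm, h.localIP_direction]⟩, fun x hx => ?_⟩
  exact hp.hypConeOpen_subset he' (by simpa using h.add_mem_hypConeOpen hx)
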